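/- Let F : ℝ^n → ℝ^n be a continuously differentiable vector field with div F = 0 whose flow ψ^t is defined for all time and is a diffeomorphism for each t. Then ψ^t preserves Lebesgue volume: for every measurable set A and every t ≥ 0, the Lebesgue measure of ψ^t(A) equals that of A. In particular, the Hamiltonian vector field F(x,v) = (∇_v H(x,v), −∇_x H(x,v)) for twice continuously differentiable H is divergence-free, so the Hamiltonian flow preserves volume (Liouville's theorem). -/

import Mathlib

open MeasureTheory

/-- Divergence of a vector field as the trace of its (Fréchet) derivative. -/
noncomputable def divg {M : Type*} [NormedAddCommGroup M] [NormedSpace ℝ M]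
    (F : M → M) (x : M) : ℝ :=
  LinearMap.trace ℝ M (fderiv ℝ F x).toLinearMap

section LiouvilleHelpers

open Set Filter Topology

variable {E : Type*} [NormedAddCommGroup E] [NormedSpace ℝ E]

/-- Uniqueness for global trajectories of a `C¹` field gives the flow property. -/
theorem liou_flow_add (F : E → E) (hF : ContDiff ℝ 1 F) (ψ : ℝ → E → E) (h0 : ψ 0 = id)
    (hode : ∀ y t, HasDerivAt (fun s => ψ s y) (F (ψ t y)) t) (t s : ℝ) (y : E) :
    ψ (t + s) y = ψ s (ψ t y) := by
  have hu : ∀ r, HasDerivAt (fun r => ψ (t + r) y) (F (ψ (t + r) y)) r := by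
    intro r
    have := (hode y (t + r)).comp_const_add t r
    simpa using this
  have hv : ∀ r, HasDerivAt (fun r => ψ r (ψ t y)) (F (ψ r (ψ t y))) r := fun r => hode _ r
  set T : ℝ := |s| + 1 with hT
  have hTpos : 0 < T := by positivity
  let S : Set E := ((fun r => ψ (t + r) y) '' Icc (-T) T) ∪ ((fun r => ψ r (ψ t y)) '' Icc (-T) T)
  have hS : IsCompact S := by
    apply IsCompact.union
    · exact isCompact_Icc.image (continuous_iff_continuousAt.2 fun r => (hu r).continuousAt)
    · exact isCompact_Icc.image (continuous_iff_continuousAt.2 fun r => (hv r).continuousAt)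
  obtain ⟨K, hK⟩ := LocallyLipschitzOn.exists_lipschitzOnWith_of_compact hS
    (hF.locallyLipschitz.locallyLipschitzOn (s := S))
  have := ODE_solution_unique_of_mem_Ioo (v := fun _ => F) (s := fun _ => S) (K := K)
    (a := -T) (b := T) (t₀ := 0)
    (f := fun r => ψ (t + r) y) (g := fun r => ψ r (ψ t y)) (fun _ _ => hK)
    ⟨by linarith, hTpos⟩
    (fun r hr => ⟨hu r, Or.inl ⟨r, Ioo_subset_Icc_self hr, rfl⟩⟩)
    (fun r hr => ⟨hv r, Or.inr ⟨r, Ioo_subset_Icc_self hr, rfl⟩⟩)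
    (by simp [h0])
  exact this (abs_lt.1 (by rw [hT]; linarith))

/-- Right derivative at time zero of the space derivative of the flow. -/
theorem liou_right (F : E → E) (L : E →L[ℝ] E) (z : E) (hF : HasStrictFDerivAt F L z)
    (ψ : ℝ → E → E) (h0 : ψ 0 = id)
    (hode : ∀ y t, HasDerivAt (fun s => ψ s y) (F (ψ t y)) t)
    (hd : ∀ t, DifferentiableAt ℝ (ψ t) z) :
    HasDerivWithinAt (fun s => fderiv ℝ (ψ s) z) L (Ici 0) 0 := by
  rw [hasDerivWithinAt_iff_isLittleO, Asymptotics.isLittleO_iff]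
  intro c hc
  set K : ℝ := ‖L‖ + 1 with hKdef
  have hLK : ‖L‖ ≤ K := by linarith
  have hK1 : 1 ≤ K := by have := norm_nonneg L; linarith
  have hK : 0 < K := by linarith
  set ε : ℝ := min 1 (c / 4) with hε
  have hεpos : 0 < ε := by positivity
  have hε1 : ε ≤ 1 := min_le_left _ _
  have hεc : ε ≤ c / 4 := min_le_right _ _
  have hst := hF.isLittleO.def hεpos
  rw [nhds_prod_eq, Metric.nhds_basis_ball.prod_self.eventually_iff] at hst
  obtain ⟨r, hr, hst⟩ := hst
  have hst' : ∀ p ∈ Metric.ball z r, ∀ q ∈ Metric.ball z r,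
      ‖F p - F q - L (p - q)‖ ≤ ε * ‖p - q‖ := fun p hp q hq => hst (x := (p, q)) ⟨hp, hq⟩
  have hlip : ∀ p ∈ Metric.ball z r, ∀ q ∈ Metric.ball z r, ‖F p - F q‖ ≤ K * ‖p - q‖ := by
    intro p hp q hq
    have h1 := hst' p hp q hq
    have h2 := L.le_opNorm (p - q)
    have h3 : ‖F p - F q‖ ≤ ‖F p - F q - L (p - q)‖ + ‖L (p - q)‖ := by
      simpa using norm_add_le (F p - F q - L (p - q)) (L (p - q))
    have := mul_le_mul_of_nonneg_right hε1 (norm_nonneg (p - q))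
    rw [hKdef]; nlinarith
  set M : ℝ := ‖F z‖ + K * r + 1 with hM
  have hMpos : 0 < M := by positivity
  have hbd : ∀ p ∈ Metric.ball z r, ‖F p‖ < M := by
    intro p hp
    have h1 := hlip p hp z (Metric.mem_ball_self hr)
    have h2 : ‖F p‖ ≤ ‖F p - F z‖ + ‖F z‖ := by simpa using norm_add_le (F p - F z) (F z)
    have h3 : ‖p - z‖ < r := by simpa [dist_eq_norm] using hp
    have := mul_le_mul_of_nonneg_left h3.le hK.le
    rw [hM]; linarith
  set δ : ℝ := min (r / (4 * M)) (min (1 / (3 * K)) (c / (4 * K ^ 2))) with hδ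
  have hδpos : 0 < δ := by positivity
  have hδ1 : M * δ ≤ r / 4 := by
    have : δ ≤ r / (4 * M) := min_le_left _ _
    rw [le_div_iff₀ (by positivity)] at this
    linarith
  have hδ2 : K * δ ≤ 1 / 3 := by
    have : δ ≤ 1 / (3 * K) := (min_le_right _ _).trans (min_le_left _ _)
    rw [le_div_iff₀ (by positivity)] at this
    linarith
  have hδ3 : K ^ 2 * δ ≤ c / 4 := by
    have : δ ≤ c / (4 * K ^ 2) := (min_le_right _ _).trans (min_le_right _ _)
    rw [le_div_iff₀ (by positivity)] at this
    linarith
  -- trajectories starting near `z` stay in the ball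
  have hstay : ∀ p ∈ Metric.ball z (r / 4), ∀ s ∈ Icc 0 δ, ψ s p ∈ Metric.ball z r := by
    intro p hp s hs
    have hp' : ‖p - z‖ < r / 4 := by simpa [dist_eq_norm] using hp
    have key := image_norm_le_of_norm_deriv_right_lt_deriv_boundary (a := 0) (b := δ)
      (f := fun s => ψ s p - z) (f' := fun s => F (ψ s p)) (B := fun s => r / 4 + s * M)
      (B' := fun _ => M)
      (fun x _ => ((hode p x).sub_const z).continuousAt.continuousWithinAt)
      (fun x _ => ((hode p x).sub_const z).hasDerivWithinAt)
      (by simp [h0]; exact hp'.le)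
      (fun x => by simpa using ((hasDerivAt_id x).mul_const M).const_add (r / 4))
      (fun x hx he => by
        apply hbd
        rw [mem_ball_iff_norm, he]
        have := mul_le_mul_of_nonneg_left hx.2.le hMpos.le
        linarith) hs
    rw [mem_ball_iff_norm]
    have := mul_le_mul_of_nonneg_left hs.2 hMpos.le
    linarith
  have hz4 : z ∈ Metric.ball z (r / 4) := Metric.mem_ball_self (by positivity)
  have main : ∀ p ∈ Metric.ball z (r / 4), ∀ s ∈ Icc 0 δ,
      ‖ψ s p - ψ s z - (p - z) - s • L (p - z)‖ ≤ c * s * ‖p - z‖ := by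
    intro p hp s hs
    by_cases hpz : p = z
    · simp [hpz]
    have hh : 0 < ‖p - z‖ := norm_pos_iff.2 (sub_ne_zero.2 hpz)
    have hder : ∀ x, HasDerivAt (fun s => ψ s p - ψ s z) (F (ψ x p) - F (ψ x z)) x :=
      fun x => (hode p x).sub (hode z x)
    have hder' : ∀ x ∈ Icc 0 δ, ‖F (ψ x p) - F (ψ x z)‖ ≤ K * ‖ψ x p - ψ x z‖ :=
      fun x hx => hlip _ (hstay p hp x hx) _ (hstay z hz4 x hx)
    have hu : ∀ x ∈ Icc 0 δ, ‖ψ x p - ψ x z‖ ≤ 2 * ‖p - z‖ := by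
      intro x hx
      have key := image_norm_le_of_norm_deriv_right_lt_deriv_boundary (a := 0) (b := δ)
        (f := fun s => ψ s p - ψ s z) (f' := fun s => F (ψ s p) - F (ψ s z))
        (B := fun s => ‖p - z‖ + s * (3 * K * ‖p - z‖))
        (B' := fun _ => 3 * K * ‖p - z‖)
        (fun x _ => (hder x).continuousAt.continuousWithinAt)
        (fun x _ => (hder x).hasDerivWithinAt)
        (by simp [h0])
        (fun x => by
          simpa using ((hasDerivAt_id x).mul_const (3 * K * ‖p - z‖)).const_add ‖p - z‖)
        (fun x hx he => by
          have h1 := hder' x (Ico_subset_Icc_self hx)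
          rw [he] at h1
          have h2 : K * x ≤ 1 / 3 := (mul_le_mul_of_nonneg_left hx.2.le hK.le).trans hδ2
          have h3 : 0 < K * ‖p - z‖ := by positivity
          nlinarith [mul_le_mul_of_nonneg_left h2 h3.le]) hx
      have h2 : K * x ≤ 1 / 3 := (mul_le_mul_of_nonneg_left hx.2 hK.le).trans hδ2
      nlinarith [mul_le_mul_of_nonneg_left h2 hh.le]
    have hu2 : ∀ x ∈ Icc 0 δ, ‖ψ x p - ψ x z - (p - z)‖ ≤ 2 * K * ‖p - z‖ * δ := by
      intro x hx
      have := norm_image_sub_le_of_norm_deriv_le_segment' (a := 0) (b := δ)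
        (f := fun s => ψ s p - ψ s z) (C := 2 * K * ‖p - z‖)
        (fun x _ => (hder x).hasDerivWithinAt)
        (fun x hx => (hder' x (Ico_subset_Icc_self hx)).trans (by
          have := mul_le_mul_of_nonneg_left (hu x (Ico_subset_Icc_self hx)) hK.le
          linarith)) x hx
      simp only [h0, id, sub_zero] at this
      refine this.trans ?_
      exact mul_le_mul_of_nonneg_left hx.2 (by positivity)
    have := norm_image_sub_le_of_norm_deriv_le_segment' (a := 0) (b := δ)
        (f := fun s => ψ s p - ψ s z - s • L (p - z)) (C := c * ‖p - z‖)
        (f' := fun s => F (ψ s p) - F (ψ s z) - L (p - z))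
        (fun x _ => by
          have := (hder x).fun_sub ((hasDerivAt_id x).smul_const (L (p - z)))
          simpa using this.hasDerivWithinAt)
        (fun x hx' => by
          have hx := Ico_subset_Icc_self hx'
          have h1 := hst' _ (hstay p hp x hx) _ (hstay z hz4 x hx)
          have h2 := L.le_opNorm (ψ x p - ψ x z - (p - z))
          have h3 := norm_add_le (F (ψ x p) - F (ψ x z) - L (ψ x p - ψ x z))
            (L (ψ x p - ψ x z - (p - z)))
          have h4 : F (ψ x p) - F (ψ x z) - L (ψ x p - ψ x z) + L (ψ x p - ψ x z - (p - z))
            = F (ψ x p) - F (ψ x z) - L (p - z) := by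
            rw [map_sub L (ψ x p - ψ x z)]; abel
          rw [h4] at h3
          have h5 : ε * ‖ψ x p - ψ x z‖ ≤ c / 4 * (2 * ‖p - z‖) :=
            mul_le_mul hεc (hu x hx) (norm_nonneg _) (by positivity)
          have h6 : ‖L‖ * ‖ψ x p - ψ x z - (p - z)‖ ≤ K * (2 * K * ‖p - z‖ * δ) :=
            mul_le_mul hLK (hu2 x hx) (norm_nonneg _) (by positivity)
          have h7 := mul_le_mul_of_nonneg_left hδ3 hh.le
          nlinarith) s hs
    simp only [h0, id, sub_zero, zero_smul] at this
    have e : ψ s p - ψ s z - (p - z) - s • L (p - z) = ψ s p - ψ s z - s • L (p - z) - (p - z) := by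
      abel
    rw [e]
    linarith
  have hev : ∀ᶠ s in 𝓝[≥] (0 : ℝ), s ∈ Icc 0 δ := Icc_mem_nhdsGE hδpos
  filter_upwards [hev] with s hs
  have hid : fderiv ℝ (ψ 0) z = ContinuousLinearMap.id ℝ E := by rw [h0]; exact fderiv_id
  have hg : HasFDerivAt (fun p => ψ s p - p - s • L p)
      (fderiv ℝ (ψ s) z - ContinuousLinearMap.id ℝ E - s • L) z :=
    ((hd s).hasFDerivAt.sub (hasFDerivAt_id z)).sub (L.hasFDerivAt.const_smul s)
  rw [hid, sub_zero, Real.norm_of_nonneg hs.1]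
  refine hg.le_of_lip' (mul_nonneg hc.le hs.1) ?_
  filter_upwards [Metric.ball_mem_nhds z (show 0 < r / 4 by positivity)] with p hp
  have := main p hp s hs
  convert this using 2
  rw [map_sub, smul_sub]; abel

theorem liou_deriv_zero (F : E → E) (hF : ContDiff ℝ 1 F) (z : E)
    (ψ : ℝ → E → E) (h0 : ψ 0 = id)
    (hode : ∀ y t, HasDerivAt (fun s => ψ s y) (F (ψ t y)) t)
    (hd : ∀ t, DifferentiableAt ℝ (ψ t) z) :
    HasDerivAt (fun s => fderiv ℝ (ψ s) z) (fderiv ℝ F z) 0 := by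
  have hs : HasStrictFDerivAt F (fderiv ℝ F z) z := hF.contDiffAt.hasStrictFDerivAt (by simp)
  have h1 := liou_right F _ z hs ψ h0 hode hd
  have h2 := liou_right (fun x => - F x) _ z hs.neg (fun s => ψ (-s)) (by simpa using h0)
    (fun y t => by
      have := (hode y (-t)).scomp t (hasDerivAt_neg t)
      simpa [Function.comp_def] using this) (fun t => hd (-t))
  have h3 : HasDerivWithinAt (fun s => fderiv ℝ (ψ s) z) (fderiv ℝ F z) (Iic 0) 0 := by
    have h2' : HasDerivWithinAt (fun s => fderiv ℝ (ψ (-s)) z) (-fderiv ℝ F z) (Ici 0) (-(0:ℝ)) := by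
      simpa using h2
    have := h2'.scomp (0:ℝ) (hasDerivAt_neg (0:ℝ)).hasDerivWithinAt (s := Iic 0)
      (fun x hx => by simpa using hx)
    simpa [Function.comp_def] using this
  have := h3.union h1
  rwa [Iic_union_Ici, hasDerivWithinAt_univ] at this

variable [FiniteDimensional ℝ E]

theorem liou_det_diff : Differentiable ℝ (fun A : E →L[ℝ] E => A.det) := by
  let b := Module.finBasis ℝ E
  have : (fun A : E →L[ℝ] E => A.det) = fun A : E →L[ℝ] E =>
      ∑ σ : Equiv.Perm (Fin (Module.finrank ℝ E)), ((Equiv.Perm.sign σ : ℤ) : ℝ) *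
        ∏ i, LinearMap.toContinuousLinearMap (b.coord (σ i)) (A (b i)) := by
    funext A
    rw [ContinuousLinearMap.det, ← LinearMap.det_toMatrix b, Matrix.det_apply']
    simp [LinearMap.toMatrix_apply]
  rw [this]
  fun_prop

theorem liou_jacobi (M : ℝ → E →L[ℝ] E) (L : E →L[ℝ] E) (h0 : M 0 = 1)
    (hM : HasDerivAt M L 0) :
    HasDerivAt (fun s => (M s).det) (LinearMap.trace ℝ E L.toLinearMap) 0 := by
  let D := fderiv ℝ (fun A : E →L[ℝ] E => A.det) 1
  have hD : HasFDerivAt (fun A : E →L[ℝ] E => A.det) D 1 := (liou_det_diff 1).hasFDerivAt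
  have h1 : HasDerivAt (fun s => (M s).det) (D L) 0 := by
    have hD' : HasFDerivAt (fun A : E →L[ℝ] E => A.det) D (M 0) := by rwa [h0]
    exact hD'.comp_hasDerivAt 0 hM
  have h2 : HasDerivAt (fun s : ℝ => (1 + s • L).det) (D L) 0 := by
    have hl : HasDerivAt (fun s : ℝ => 1 + s • L) L 0 := by
      simpa using ((hasDerivAt_id (0:ℝ)).smul_const L).const_add 1
    have hD' : HasFDerivAt (fun A : E →L[ℝ] E => A.det) D (1 + (0:ℝ) • L) := by simpa using hD
    exact hD'.comp_hasDerivAt 0 hl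
  have h3 : HasDerivAt (fun s : ℝ => (1 + s • L).det) (LinearMap.trace ℝ E L.toLinearMap) 0 := by
    let b := Module.finBasis ℝ E
    let A := LinearMap.toMatrix b b L.toLinearMap
    let P := (Matrix.det (1 + (Polynomial.X : Polynomial ℝ) • A.map Polynomial.C)).divX.divX
    have e : (fun s : ℝ => (1 + s • L).det) = fun s => 1 + A.trace * s + P.eval s * s ^ 2 := by
      funext s
      rw [← Matrix.det_one_add_smul, ContinuousLinearMap.det, ← LinearMap.det_toMatrix b]
      congr 1
      have : ((1 + s • L : E →L[ℝ] E) : E →ₗ[ℝ] E) = 1 + s • (L : E →ₗ[ℝ] E) := rfl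
      rw [this, map_add, map_smul, LinearMap.toMatrix_one]
    rw [e, LinearMap.trace_eq_matrix_trace ℝ b]
    have := (((hasDerivAt_id (0:ℝ)).const_mul A.trace).const_add 1).fun_add
      ((P.hasDerivAt 0).fun_mul ((hasDerivAt_id (0:ℝ)).fun_pow 2))
    refine HasDerivAt.congr_deriv this ?_
    simp [A]
  rw [← h2.unique h3]
  exact h1

theorem liou_det_one (F : E → E) (hF : ContDiff ℝ 1 F) (hdiv : ∀ x, divg F x = 0)
    (ψ : ℝ → E → E) (h0 : ψ 0 = id)
    (hode : ∀ y t, HasDerivAt (fun s => ψ s y) (F (ψ t y)) t)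
    (hd : ∀ t, ContDiff ℝ 1 (ψ t)) (t : ℝ) (y : E) : (fderiv ℝ (ψ t) y).det = 1 := by
  have hdd : ∀ t, Differentiable ℝ (ψ t) := fun t => (hd t).differentiable (by simp)
  have hid : ∀ z, fderiv ℝ (ψ 0) z = 1 := fun z => by rw [h0]; exact fderiv_id
  have hz : ∀ z, HasDerivAt (fun s => (fderiv ℝ (ψ s) z).det) 0 0 := by
    intro z
    have := liou_jacobi _ _ (hid z) (liou_deriv_zero F hF z ψ h0 hode fun t => hdd t z)
    have e := hdiv z
    rw [divg] at e
    rwa [e] at this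
  have hJ : ∀ t, HasDerivAt (fun s => (fderiv ℝ (ψ s) y).det) 0 t := by
    intro t
    have h1 : (fun s => (fderiv ℝ (ψ s) y).det) =
        fun s => (fderiv ℝ (ψ (s - t)) (ψ t y)).det * (fderiv ℝ (ψ t) y).det := by
      funext s
      have : ψ s = ψ (s - t) ∘ ψ t := by
        funext w
        have := liou_flow_add F hF ψ h0 hode t (s - t) w
        simpa using this
      rw [this, fderiv_comp _ (hdd _ _) (hdd _ _)]
      exact LinearMap.det_comp _ _
    rw [h1]
    have h2 : HasDerivAt (fun s => (fderiv ℝ (ψ s) (ψ t y)).det) 0 (t - t) := by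
      simpa using hz (ψ t y)
    simpa using (h2.comp_sub_const t t).mul_const (fderiv ℝ (ψ t) y).det
  have := is_const_of_deriv_eq_zero (fun t => (hJ t).differentiableAt) (fun t => (hJ t).deriv) t 0
  rw [this, hid]
  exact LinearMap.det_id

theorem liou_general [MeasurableSpace E] [BorelSpace E] (μ : Measure E) [μ.IsAddHaarMeasure]
    (F : E → E) (hF : ContDiff ℝ 1 F) (hdiv : ∀ x, divg F x = 0)
    (ψ : ℝ → E → E) (h0 : ψ 0 = id)
    (hode : ∀ y t, HasDerivAt (fun s => ψ s y) (F (ψ t y)) t)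
    (hbij : ∀ t, Function.Bijective (ψ t))
    (hd : ∀ t, ContDiff ℝ 1 (ψ t)) (t : ℝ) (A : Set E) (hA : MeasurableSet A) :
    μ (ψ t '' A) = μ A := by
  rw [← lintegral_abs_det_fderiv_eq_addHaar_image μ hA
    (fun x _ => (((hd t).differentiable (by simp)) x).hasFDerivAt.hasFDerivWithinAt)
    (hbij t).injective.injOn]
  simp [liou_det_one F hF hdiv ψ h0 hode hd]

end LiouvilleHelpers

section LiouvilleHamilton

variable {d : ℕ}

/-- The Hamiltonian field expressed linearly through the derivative of `H`. -/
theorem liou_ham_eq (H : EuclideanSpace ℝ (Fin d) × EuclideanSpace ℝ (Fin d) → ℝ)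
    (hH : ContDiff ℝ 2 H) :
    (fun q : EuclideanSpace ℝ (Fin d) × EuclideanSpace ℝ (Fin d) =>
      (gradient (fun v => H (q.1, v)) q.2, -gradient (fun x => H (x, q.2)) q.1)) =
    fun q => ((InnerProductSpace.toDual ℝ (EuclideanSpace ℝ (Fin d))).symm
        ((fderiv ℝ H q).comp (ContinuousLinearMap.inr ℝ _ _)),
      -(InnerProductSpace.toDual ℝ (EuclideanSpace ℝ (Fin d))).symm
        ((fderiv ℝ H q).comp (ContinuousLinearMap.inl ℝ _ _))) := by
  funext q
  have hq : HasFDerivAt H (fderiv ℝ H q) (q.1, q.2) :=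
    (hH.differentiable (by simp) q).hasFDerivAt
  have h1 : HasFDerivAt (fun v => H (q.1, v)) _ q.2 := hq.comp q.2 (hasFDerivAt_prodMk_right q.1 q.2)
  have h2 : HasFDerivAt (fun x => H (x, q.2)) _ q.1 := hq.comp q.1 (hasFDerivAt_prodMk_left q.1 q.2)
  rw [gradient, gradient, h1.fderiv, h2.fderiv]

/-- The linear map sending the derivative of `H` to the Hamiltonian vector. -/
noncomputable def liouJ (d : ℕ) :
    ((EuclideanSpace ℝ (Fin d) × EuclideanSpace ℝ (Fin d)) →L[ℝ] ℝ) →L[ℝ]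
      EuclideanSpace ℝ (Fin d) × EuclideanSpace ℝ (Fin d) :=
  LinearMap.toContinuousLinearMap
    { toFun := fun f => ((InnerProductSpace.toDual ℝ (EuclideanSpace ℝ (Fin d))).symm
        (f.comp (ContinuousLinearMap.inr ℝ _ _)),
      -(InnerProductSpace.toDual ℝ (EuclideanSpace ℝ (Fin d))).symm
        (f.comp (ContinuousLinearMap.inl ℝ _ _)))
      map_add' := by
        intro f g
        simp [ContinuousLinearMap.add_comp, add_comm]
      map_smul' := by
        intro c f
        simp [ContinuousLinearMap.smul_comp] }

theorem liou_ham_eq' (H : EuclideanSpace ℝ (Fin d) × EuclideanSpace ℝ (Fin d) → ℝ)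
    (hH : ContDiff ℝ 2 H) :
    (fun q : EuclideanSpace ℝ (Fin d) × EuclideanSpace ℝ (Fin d) =>
      (gradient (fun v => H (q.1, v)) q.2, -gradient (fun x => H (x, q.2)) q.1)) =
    fun q => liouJ d (fderiv ℝ H q) := by
  rw [liou_ham_eq H hH]; rfl

theorem liou_ham_contDiff (H : EuclideanSpace ℝ (Fin d) × EuclideanSpace ℝ (Fin d) → ℝ)
    (hH : ContDiff ℝ 2 H) :
    ContDiff ℝ 1 (fun q : EuclideanSpace ℝ (Fin d) × EuclideanSpace ℝ (Fin d) =>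
      (gradient (fun v => H (q.1, v)) q.2, -gradient (fun x => H (x, q.2)) q.1)) := by
  rw [liou_ham_eq' H hH]
  exact (liouJ d).contDiff.comp (hH.fderiv_right (by norm_num))

theorem liou_ham_div (H : EuclideanSpace ℝ (Fin d) × EuclideanSpace ℝ (Fin d) → ℝ)
    (hH : ContDiff ℝ 2 H) (p : EuclideanSpace ℝ (Fin d) × EuclideanSpace ℝ (Fin d)) :
    divg (fun q : EuclideanSpace ℝ (Fin d) × EuclideanSpace ℝ (Fin d) =>
      (gradient (fun v => H (q.1, v)) q.2, -gradient (fun x => H (x, q.2)) q.1)) p = 0 := by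
  rw [liou_ham_eq' H hH, divg]
  have hdiff : DifferentiableAt ℝ (fderiv ℝ H) p :=
    (hH.fderiv_right (m := 1) (by norm_num)).differentiable (by simp) p
  have hfd : fderiv ℝ (fun q => liouJ d (fderiv ℝ H q)) p =
      (liouJ d).comp (fderiv ℝ (fderiv ℝ H) p) :=
    ((liouJ d).hasFDerivAt.comp p hdiff.hasFDerivAt).fderiv
  have hsymm : IsSymmSndFDerivAt ℝ H p := hH.contDiffAt.isSymmSndFDerivAt (by simp)
  rw [hfd]
  let b := EuclideanSpace.basisFun (Fin d) ℝ
  rw [LinearMap.trace_eq_matrix_trace ℝ (b.toBasis.prod b.toBasis), Matrix.trace,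
    Fintype.sum_sum_type, ← Finset.sum_add_distrib]
  apply Finset.sum_eq_zero
  intro i _
  have hrepr : ∀ (f : EuclideanSpace ℝ (Fin d) →L[ℝ] ℝ),
      b.toBasis.repr ((InnerProductSpace.toDual ℝ (EuclideanSpace ℝ (Fin d))).symm f) i
        = f (b i) := by
    intro f
    rw [OrthonormalBasis.coe_toBasis_repr_apply, OrthonormalBasis.repr_apply_apply,
      real_inner_comm, InnerProductSpace.toDual_symm_apply]
  have h1 : (b.toBasis.prod b.toBasis) (Sum.inl i) = (b i, 0) := by
    simp [Module.Basis.prod_apply]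
  have h2 : (b.toBasis.prod b.toBasis) (Sum.inr i) = (0, b i) := by
    simp [Module.Basis.prod_apply]
  rw [Matrix.diag_apply, Matrix.diag_apply, LinearMap.toMatrix_apply, LinearMap.toMatrix_apply,
    Module.Basis.prod_repr_inl, Module.Basis.prod_repr_inr, h1, h2]
  have e1 : b.toBasis.repr (liouJ d (fderiv ℝ (fderiv ℝ H) p (b i, 0))).1 i
      = fderiv ℝ (fderiv ℝ H) p (b i, 0) (0, b i) := hrepr _
  have e2 : b.toBasis.repr (liouJ d (fderiv ℝ (fderiv ℝ H) p (0, b i))).2 i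
      = - fderiv ℝ (fderiv ℝ H) p (0, b i) (b i, 0) := by
    have : (liouJ d (fderiv ℝ (fderiv ℝ H) p (0, b i))).2 =
      -(InnerProductSpace.toDual ℝ (EuclideanSpace ℝ (Fin d))).symm
        ((fderiv ℝ (fderiv ℝ H) p (0, b i)).comp (ContinuousLinearMap.inl ℝ _ _)) := rfl
    rw [this, map_neg, Finsupp.neg_apply, hrepr]
    rfl
  have hs := hsymm (b i, 0) (0, b i)
  change b.toBasis.repr (liouJ d (fderiv ℝ (fderiv ℝ H) p (b i, 0))).1 i +
    b.toBasis.repr (liouJ d (fderiv ℝ (fderiv ℝ H) p (0, b i))).2 i = 0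
  rw [e1, e2, hs]
  ring

end LiouvilleHamilton

/-- Liouville's theorem: the flow of a divergence-free `C¹` vector field that is a
diffeomorphism at each time preserves Lebesgue volume; in particular, the
Hamiltonian vector field `(x,v) ↦ (∇_v H, −∇_x H)` of a `C²` Hamiltonian is
divergence-free, and hence its flow preserves volume. -/
theorem liouville_volume_preservation
    {n d : ℕ}
    -- Part 1: general divergence-free fields.
    (F : EuclideanSpace ℝ (Fin n) → EuclideanSpace ℝ (Fin n))
    (hF : ContDiff ℝ 1 F) (hdivF : ∀ x, divg F x = 0)
    (ψ : ℝ → EuclideanSpace ℝ (Fin n) → EuclideanSpace ℝ (Fin n))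
    (hψ0 : ψ 0 = id)
    (hψode : ∀ y t, HasDerivAt (fun s => ψ s y) (F (ψ t y)) t)
    (hψbij : ∀ t, Function.Bijective (ψ t))
    (hψsmooth : ∀ t, ContDiff ℝ 1 (ψ t))
    (hψinv : ∀ t, ContDiff ℝ 1 (Function.invFun (ψ t))) :
    (∀ t : ℝ, 0 ≤ t → ∀ A : Set (EuclideanSpace ℝ (Fin n)),
        MeasurableSet A → volume (ψ t '' A) = volume A) ∧
      -- Part 2: Hamiltonian vector fields are divergence-free, so their flows
      -- preserve volume.
      ∀ (H : EuclideanSpace ℝ (Fin d) × EuclideanSpace ℝ (Fin d) → ℝ),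
        ContDiff ℝ 2 H →
        (∀ p : EuclideanSpace ℝ (Fin d) × EuclideanSpace ℝ (Fin d),
          divg (fun q => (gradient (fun v => H (q.1, v)) q.2,
            -gradient (fun x => H (x, q.2)) q.1)) p = 0) ∧
        ∀ (χ : ℝ → EuclideanSpace ℝ (Fin d) × EuclideanSpace ℝ (Fin d) →
            EuclideanSpace ℝ (Fin d) × EuclideanSpace ℝ (Fin d)),
          χ 0 = id →
          (∀ p t, HasDerivAt (fun s => χ s p)
            (gradient (fun v => H ((χ t p).1, v)) (χ t p).2,
              -gradient (fun x => H (x, (χ t p).2)) (χ t p).1) t) →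
          (∀ t, Function.Bijective (χ t)) →
          (∀ t, ContDiff ℝ 1 (χ t)) →
          (∀ t, ContDiff ℝ 1 (Function.invFun (χ t))) →
          ∀ t : ℝ, 0 ≤ t →
            ∀ A : Set (EuclideanSpace ℝ (Fin d) × EuclideanSpace ℝ (Fin d)),
              MeasurableSet A → volume (χ t '' A) = volume A := by
  refine ⟨fun t _ A hA => liou_general volume F hF hdivF ψ hψ0 hψode hψbij hψsmooth t A hA, ?_⟩
  intro H hH
  refine ⟨liou_ham_div H hH, ?_⟩
  intro χ h0 hode hbij hsm _ t _ A hA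
  have : (volume : Measure (EuclideanSpace ℝ (Fin d) × EuclideanSpace ℝ (Fin d))).IsAddHaarMeasure :=
    Measure.prod.instIsAddHaarMeasure _ _
  exact liou_general volume _ (liou_ham_contDiff H hH) (liou_ham_div H hH) χ h0 hode hbij hsm t A hA
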